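/- Fix 0 < q < 1, 0 < a < q^{−1}, b < q^{−1} with b ≠ 0 and bq < 1, and c ∈ ℝ ∖ {0}; set γ = (1+abq²) − (acq + bq/c). Let h_n = ((abq²;q)_∞/(aq;q)_∞)·((1−abq)(aq)^n/(1−abq^{2n+1}))·((q;q)_n (bq;q)_n)/((aq;q)_n (abq;q)_n) and φ_n(x) = p_n(x;a,b;q)/√(h_n), φ_{−1} := 0. Then for every n ∈ ℕ and every x ≠ 0: (a(bq²x−1)(1−bqx)/(x(1−bq)))·(φ_n(qx) − φ_n(x)) + ((x−1)(1−bqx)/(x(1−bq)))·(φ_n(q^{−1}x) − φ_n(x)) + γ·((1−bqx)/(1−bq))·φ_n(x) = a_n^γ φ_{n+1}(x) + b_n^γ φ_n(x) + a_{n−1}^γ φ_{n−1}(x), where a_{−1}^γ := 0, a_n^γ = (bq√(aq)/(1−bq))·((1−acq^{n+1})(1−bq^{n+1}/c)/(1−abq^{2n+2}))·√((1−q^{n+1})(1−aq^{n+1})(1−bq^{n+1})(1−abq^{n+1})/((1−abq^{2n+1})(1−abq^{2n+3}))), and b_n^γ = q^{−n}(1−acq^{n+1})(1−bq^{n+1}/c)(1−abq^{n+1})(1−bq^{n+1})/((1−bq)(1−abq^{2n+1})(1−abq^{2n+2}))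 + ab²q^{n+2}(1−acq^{n})(1−bq^{n}/c)(1−q^{n})(1−aq^{n})/((1−bq)(1−abq^{2n})(1−abq^{2n+1})). -/

import Mathlib

/-- q-shifted factorial `(a;q)_k = ∏_{j=0}^{k-1} (1 - a q^j)`. -/
noncomputable def qPoch (q a : ℝ) (k : ℕ) : ℝ := ∏ j ∈ Finset.range k, (1 - a * q ^ j)

/-- Infinite q-shifted factorial `(a;q)_∞ = ∏_{j=0}^{∞} (1 - a q^j)`. -/
noncomputable def qPochInf (q a : ℝ) : ℝ := ∏' j : ℕ, (1 - a * q ^ j)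

/-- Little q-Jacobi polynomial
`p_n(x;a,b;q) = ∑_{k=0}^{n} ((q^{−n};q)_k (abq^{n+1};q)_k)/((aq;q)_k (q;q)_k) (qx)^k`. -/
noncomputable def littleqJacobi (q a b : ℝ) (n : ℕ) (x : ℝ) : ℝ :=
  ∑ k ∈ Finset.range (n + 1),
    qPoch q (q ^ (-(n : ℤ))) k * qPoch q (a * b * q ^ (n + 1)) k /
      (qPoch q (a * q) k * qPoch q q k) * (q * x) ^ k

/-!
Two contiguous relations of Heine's series `₂φ₁` link the parameters `(a, b)` and `(a, bq)`: one
writes `p_n(·;a,b)` as a combination of `p_n(·;a,bq)` and `p_{n-1}(·;a,bq)`, the other writes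
`(1 - bqx) p_n(x;a,bq)` as a combination of `p_{n+1}(x;a,b)` and `p_n(x;a,b)`. Between the two,
`L^{(a,bq)} + γ` multiplies `p_n(·;a,bq)` by `q^{-n} (1 - acq^{n+1}) (1 - bq^{n+1}/c)`, so
`r (L^{(a,bq)} + γ)` is tridiagonal on the `p_n(·;a,b)`. The coefficients become symmetric after
dividing `p_n` by `√h_n`.
-/

section QPochhammer

variable {q : ℝ}

lemma qPoch_zero (q a : ℝ) : qPoch q a 0 = 1 := Finset.prod_range_zero _

lemma qPoch_succ (q a : ℝ) (k : ℕ) : qPoch q a (k + 1) = qPoch q a k * (1 - a * q ^ k) :=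
  Finset.prod_range_succ _ _

lemma qPoch_succ_left (q a : ℝ) (k : ℕ) : qPoch q a (k + 1) = (1 - a) * qPoch q (a * q) k := by
  simp only [qPoch, Finset.prod_range_succ', pow_zero, mul_one, pow_succ', mul_assoc]
  ring

lemma one_sub_mul_qPoch_mul (q a : ℝ) (k : ℕ) :
    (1 - a) * qPoch q (a * q) k = qPoch q a k * (1 - a * q ^ k) := by
  rw [← qPoch_succ_left, qPoch_succ]

lemma qPoch_eq_zero_of_lt {a : ℝ} {n k : ℕ} (hnk : n < k) (ha : a * q ^ n = 1) :
    qPoch q a k = 0 :=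
  Finset.prod_eq_zero (Finset.mem_range.2 hnk) (by rw [ha, sub_self])

lemma one_sub_mul_pow_pos (hq0 : 0 < q) (hq1 : q ≤ 1) {a : ℝ} {m n : ℕ} (ha : a * q ^ m < 1)
    (hmn : m ≤ n) : 0 < 1 - a * q ^ n := by
  obtain ⟨j, rfl⟩ := Nat.exists_eq_add_of_le hmn
  rw [pow_add, ← mul_assoc, sub_pos]
  exact (mul_lt_of_lt_one_left (pow_pos hq0 j) ha).trans_le (pow_le_one₀ hq0.le hq1)

lemma qPoch_pos (hq0 : 0 < q) (hq1 : q ≤ 1) {a : ℝ} (ha : a < 1) (k : ℕ) : 0 < qPoch q a k :=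
  Finset.prod_pos fun _ _ ↦ one_sub_mul_pow_pos hq0 hq1 (m := 0) (by simpa) (Nat.zero_le _)

lemma qPochInf_pos (hq0 : 0 < q) (hq1 : q < 1) {a : ℝ} (ha : a < 1) : 0 < qPochInf q a := by
  have hfactor (j : ℕ) : 0 < 1 - a * q ^ j :=
    one_sub_mul_pow_pos hq0 hq1.le (m := 0) (by simpa) (Nat.zero_le j)
  have hlog : Summable fun j : ℕ ↦ Real.log (1 - a * q ^ j) := by
    simpa only [sub_eq_add_neg] using Real.summable_log_one_add_of_summable
      ((summable_geometric_of_lt_one hq0.le hq1).mul_left a).neg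
  rw [qPochInf, ← Real.rexp_tsum_eq_tprod hfactor hlog]
  exact Real.exp_pos _

end QPochhammer

section Heine

variable {q b s t c : ℝ}

/-- The coefficient of `z ^ k` in Heine's basic hypergeometric series `₂φ₁(s, t; c; q, z)`. -/
noncomputable def heineCoeff (q s t c : ℝ) (k : ℕ) : ℝ :=
  qPoch q s k * qPoch q t k / (qPoch q c k * qPoch q q k)

/-- The sum of the first `M` terms of Heine's series `₂φ₁(s, t; c; q, z)`. Leaving `M` free lets
terminating series of different lengths be compared term by term. -/
noncomputable def heineSum (q s t c : ℝ) (M : ℕ) (z : ℝ) : ℝ :=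
  ∑ k ∈ Finset.range M, heineCoeff q s t c k * z ^ k

lemma heineSum_succ (q s t c : ℝ) (M : ℕ) (z : ℝ) :
    heineSum q s t c (M + 1) z = heineSum q s t c M z + heineCoeff q s t c M * z ^ M :=
  Finset.sum_range_succ _ _

lemma heineCoeff_zero (q s t c : ℝ) : heineCoeff q s t c 0 = 1 := by
  simp only [heineCoeff, qPoch_zero, mul_one, div_one]

lemma heineCoeff_comm (q s t c : ℝ) (k : ℕ) : heineCoeff q s t c k = heineCoeff q t s c k := by
  simp only [heineCoeff, mul_comm]

lemma one_sub_pow_succ_ne_zero (hq : ∀ k, qPoch q q k ≠ 0) (k : ℕ) : 1 - q ^ (k + 1) ≠ 0 := by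
  rw [pow_succ']
  exact right_ne_zero_of_mul (qPoch_succ q q k ▸ hq (k + 1))

lemma heineCoeff_succ (hq : ∀ k, qPoch q q k ≠ 0) (hc : ∀ k, qPoch q c k ≠ 0) (s t : ℝ) (k : ℕ) :
    (1 - c * q ^ k) * (1 - q ^ (k + 1)) * heineCoeff q s t c (k + 1) =
      (1 - s * q ^ k) * (1 - t * q ^ k) * heineCoeff q s t c k := by
  have hqk := one_sub_pow_succ_ne_zero hq k
  have hck : 1 - c * q ^ k ≠ 0 := right_ne_zero_of_mul (qPoch_succ q c k ▸ hc (k + 1))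
  have hq' := hq k
  have hc' := hc k
  simp only [heineCoeff, qPoch_succ, ← pow_succ' q k]
  field_simp

lemma heineCoeff_succ_mul_right (hq : ∀ k, qPoch q q k ≠ 0) (hc : ∀ k, qPoch q c k ≠ 0)
    (s t : ℝ) (k : ℕ) :
    (1 - c * q ^ k) * (1 - q ^ (k + 1)) * heineCoeff q s (t * q) c (k + 1) =
      (1 - s) * (1 - t * q ^ (k + 1)) * heineCoeff q (s * q) (t * q) c k := by
  have h := heineCoeff_succ hq hc s (t * q) k
  have hs := one_sub_mul_qPoch_mul q s k
  rw [h]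
  simp only [heineCoeff]
  linear_combination
    -(1 - t * q ^ (k + 1)) * qPoch q (t * q) k / (qPoch q c k * qPoch q q k) * hs

lemma heineSum_contiguous (q s t c : ℝ) (M : ℕ) (z : ℝ) :
    (s - t) * heineSum q s t c M z =
      s * (1 - t) * heineSum q s (t * q) c M z - t * (1 - s) * heineSum q (s * q) t c M z := by
  simp only [heineSum, Finset.mul_sum, ← Finset.sum_sub_distrib]
  refine Finset.sum_congr rfl fun k _ ↦ ?_
  have hs := one_sub_mul_qPoch_mul q s k
  have ht := one_sub_mul_qPoch_mul q t k
  simp only [heineCoeff]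
  linear_combination z ^ k / (qPoch q c k * qPoch q q k) *
    (t * qPoch q t k * hs - s * qPoch q s k * ht)

lemma heineCoeff_contiguous_mul (hq : ∀ k, qPoch q q k ≠ 0) (hc : ∀ k, qPoch q c k ≠ 0)
    (hbc : b * c = s * t * q) (k : ℕ) :
    (s - t) * (heineCoeff q (s * q) (t * q) c (k + 1) - b * heineCoeff q (s * q) (t * q) c k) =
      (b - t) * heineCoeff q s (t * q) c (k + 1) + (s - b) * heineCoeff q (s * q) t c (k + 1) := by
  have hck : 1 - c * q ^ k ≠ 0 := right_ne_zero_of_mul (qPoch_succ q c k ▸ hc (k + 1))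
  have hst := heineCoeff_succ hq hc (s * q) (t * q) k
  have ht := heineCoeff_succ_mul_right hq hc s t k
  have hs := heineCoeff_succ_mul_right hq hc t s k
  rw [heineCoeff_comm q t, heineCoeff_comm q (t * q)] at hs
  refine mul_left_cancel₀ (mul_ne_zero hck (one_sub_pow_succ_ne_zero hq k)) ?_
  linear_combination (s - t) * hst - (b - t) * ht - (s - b) * hs +
    (s - t) * q ^ k * (1 - q ^ (k + 1)) * heineCoeff q (s * q) (t * q) c k * hbc

lemma heineSum_contiguous_mul (hq : ∀ k, qPoch q q k ≠ 0) (hc : ∀ k, qPoch q c k ≠ 0)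
    (hbc : b * c = s * t * q) (M : ℕ) (z : ℝ) :
    (s - t) * (heineSum q (s * q) (t * q) c (M + 1) z -
        b * z * heineSum q (s * q) (t * q) c M z) =
      (b - t) * heineSum q s (t * q) c (M + 1) z + (s - b) * heineSum q (s * q) t c (M + 1) z := by
  induction M with
  | zero =>
    simp only [heineSum, zero_add, Finset.sum_range_one, Finset.sum_range_zero, heineCoeff_zero]
    ring
  | succ M ih =>
    have hcoeff := heineCoeff_contiguous_mul hq hc hbc M
    simp only [heineSum_succ _ _ _ _ (M + 1)]
    rw [heineSum_succ q (s * q) (t * q) c M] at ih ⊢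
    linear_combination ih + z ^ (M + 1) * hcoeff

/- Heine's q-difference equation, with the remainder left by truncating the series; the left-hand
side telescopes. -/
lemma heineSum_qDifference (hq0 : q ≠ 0) (hq : ∀ k, qPoch q q k ≠ 0)
    (hc : ∀ k, qPoch q c k ≠ 0) (s t : ℝ) (M : ℕ) (z : ℝ) :
    (s * t * z - c) * (heineSum q s t c M (q * z) - heineSum q s t c M z) +
        (z - q) * (heineSum q s t c M (z / q) - heineSum q s t c M z) +
        (1 - s) * (1 - t) * z * heineSum q s t c M z =
      (1 - q ^ M) * (q - c * q ^ M) / q ^ M * heineCoeff q s t c M * z ^ M := by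
  induction M with
  | zero => simp [heineSum]
  | succ M ih =>
    have hcoeff := heineCoeff_succ hq hc s t M
    have hqM : q ^ M ≠ 0 := pow_ne_zero M hq0
    have hremainder : (1 - q ^ (M + 1)) * (q - c * q ^ (M + 1)) / q ^ (M + 1) *
          heineCoeff q s t c (M + 1) =
        (1 - s * q ^ M) * (1 - t * q ^ M) / q ^ M * heineCoeff q s t c M := by
      rw [div_mul_eq_mul_div, div_mul_eq_mul_div, div_eq_div_iff (pow_ne_zero _ hq0) hqM]
      linear_combination q ^ (M + 1) * hcoeff
    simp only [heineSum_succ, hremainder, mul_pow, div_pow]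
    have hterm : (s * t * z - c) * (q ^ M - 1) + (z - q) * (1 / q ^ M - 1) + (1 - s) * (1 - t) * z =
        (1 - s * q ^ M) * (1 - t * q ^ M) / q ^ M * z -
          (1 - q ^ M) * (q - c * q ^ M) / q ^ M := by
      field_simp
      ring
    linear_combination ih + heineCoeff q s t c M * z ^ M * hterm

end Heine

section LittleqJacobi

variable {q a b c : ℝ}

lemma zpow_neg_mul_pow (hq0 : q ≠ 0) (n : ℕ) : q ^ (-(n : ℤ)) * q ^ n = 1 := by
  rw [zpow_neg, zpow_natCast, inv_mul_cancel₀ (pow_ne_zero n hq0)]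

lemma zpow_neg_succ_mul (hq0 : q ≠ 0) (n : ℕ) :
    q ^ (-((n + 1 : ℕ) : ℤ)) * q = q ^ (-(n : ℤ)) := by
  rw [← zpow_add_one₀ hq0]
  congr 1
  push_cast
  ring

lemma littleqJacobi_zero (q a b x : ℝ) : littleqJacobi q a b 0 x = 1 := by
  simp [littleqJacobi, qPoch_zero]

lemma littleqJacobi_eq_heineSum (hq0 : q ≠ 0) (a b : ℝ) {n M : ℕ} (hnM : n < M) (x : ℝ) :
    littleqJacobi q a b n x =
      heineSum q (q ^ (-(n : ℤ))) (a * b * q ^ (n + 1)) (a * q) M (q * x) := by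
  refine Finset.sum_subset (Finset.range_subset_range.2 hnM) fun k _ hk ↦ ?_
  have hnk : n < k := by simpa using hk
  rw [qPoch_eq_zero_of_lt hnk (zpow_neg_mul_pow hq0 n)]
  simp only [zero_mul, zero_div]

/- For `n = 0` the index `n - 1` is truncated to `0`, with coefficient `1 - q ^ 0 = 0`. -/
lemma littleqJacobi_contiguous (hq0 : q ≠ 0) (a b : ℝ) (n : ℕ) (x : ℝ) :
    (1 - a * b * q ^ (2 * n + 1)) * littleqJacobi q a b n x =
      (1 - a * b * q ^ (n + 1)) * littleqJacobi q a (b * q) n x +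
        a * b * q ^ (n + 1) * (1 - q ^ n) * littleqJacobi q a (b * q) (n - 1) x := by
  rcases n with _ | n
  · simp only [littleqJacobi_zero]
    ring
  · have h := heineSum_contiguous q (q ^ (-((n + 1 : ℕ) : ℤ))) (a * b * q ^ (n + 2)) (a * q)
      (n + 2) (q * x)
    rw [zpow_neg_succ_mul hq0, show a * b * q ^ (n + 2) * q = a * (b * q) * q ^ (n + 2) by ring,
      ← littleqJacobi_eq_heineSum hq0 a b (by lia), ← littleqJacobi_eq_heineSum hq0 a _ (by lia),
      show a * b * q ^ (n + 2) = a * (b * q) * q ^ (n + 1) by ring,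
      ← littleqJacobi_eq_heineSum hq0 a _ (by lia)] at h
    have hz := zpow_neg_mul_pow hq0 (n + 1)
    rw [Nat.add_sub_cancel]
    linear_combination q ^ (n + 1) * h + (-littleqJacobi q a b (n + 1) x +
      (1 - a * b * q ^ (n + 2)) * littleqJacobi q a (b * q) (n + 1) x +
      a * b * q ^ (n + 2) * littleqJacobi q a (b * q) n x) * hz

lemma littleqJacobi_contiguous_mul (hq0 : q ≠ 0) (hq : ∀ k, qPoch q q k ≠ 0)
    (ha : ∀ k, qPoch q (a * q) k ≠ 0) (b : ℝ) (n : ℕ) (x : ℝ) :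
    (1 - a * b * q ^ (2 * n + 2)) * ((1 - b * q * x) * littleqJacobi q a (b * q) n x) =
      b * q ^ (n + 1) * (1 - a * q ^ (n + 1)) * littleqJacobi q a b (n + 1) x +
        (1 - b * q ^ (n + 1)) * littleqJacobi q a b n x := by
  have hz := zpow_neg_mul_pow hq0 (n + 1)
  have h := heineSum_contiguous_mul hq ha (b := b) (s := q ^ (-((n + 1 : ℕ) : ℤ)))
    (t := a * b * q ^ (n + 1)) (by linear_combination -a * b * q * hz) (n + 1) (q * x)
  rw [zpow_neg_succ_mul hq0, ← littleqJacobi_eq_heineSum hq0 a b (by lia),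
    show a * b * q ^ (n + 1) * q = a * (b * q) * q ^ (n + 1) by ring,
    ← littleqJacobi_eq_heineSum hq0 a _ (by lia), ← littleqJacobi_eq_heineSum hq0 a _ (by lia),
    show a * (b * q) * q ^ (n + 1) = a * b * q ^ (n + 2) by ring,
    ← littleqJacobi_eq_heineSum hq0 a _ (by lia)] at h
  linear_combination q ^ (n + 1) * h +
    (littleqJacobi q a b n x - (1 - b * q * x) * littleqJacobi q a (b * q) n x) * hz

/-- The second-order q-difference operator `L^{(a,b)}` diagonalised by the little q-Jacobi
polynomials with parameters `(a, b)`. Its value at `x = 0` is a junk value. -/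
noncomputable def littleqJacobiOperator (q a b : ℝ) : (ℝ → ℝ) →ₗ[ℝ] ℝ → ℝ where
  toFun f x := a * (b * q * x - 1) / x * (f (q * x) - f x) + (x - 1) / x * (f (x / q) - f x)
  map_add' f g := by
    ext x
    simp only [Pi.add_apply]
    ring
  map_smul' r f := by
    ext x
    simp only [Pi.smul_apply, smul_eq_mul, RingHom.id_apply]
    ring

lemma littleqJacobiOperator_littleqJacobi (hq0 : q ≠ 0) (hq : ∀ k, qPoch q q k ≠ 0)
    (ha : ∀ k, qPoch q (a * q) k ≠ 0) (b : ℝ) (n : ℕ) {x : ℝ} (hx : x ≠ 0) :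
    littleqJacobiOperator q a b (littleqJacobi q a b n) x =
      (q ^ (-(n : ℤ)) - 1) * (1 - a * b * q ^ (n + 1)) * littleqJacobi q a b n x := by
  have h := heineSum_qDifference hq0 hq ha (q ^ (-(n : ℤ))) (a * b * q ^ (n + 1)) (n + 1) (q * x)
  have hvanish : heineCoeff q (q ^ (-(n : ℤ))) (a * b * q ^ (n + 1)) (a * q) (n + 1) = 0 := by
    rw [heineCoeff, qPoch_eq_zero_of_lt n.lt_succ_self (zpow_neg_mul_pow hq0 n)]
    simp only [zero_mul, zero_div]
  rw [hvanish, mul_div_assoc q x q] at h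
  simp only [← littleqJacobi_eq_heineSum hq0 a b n.lt_succ_self] at h
  have hz := zpow_neg_mul_pow hq0 n
  change a * (b * q * x - 1) / x * _ + (x - 1) / x * _ = _
  field_simp
  refine mul_left_cancel₀ hq0 ?_
  linear_combination h - a * b * q ^ 2 * x *
    (littleqJacobi q a b n (q * x) - littleqJacobi q a b n x) * hz

/-- The operator `T^γ = r (L^{(a,bq)} + γ)` with `r(x) = (1 - bqx) / (1 - bq)`, which shifts the
parameter `b`. -/
noncomputable def bShiftOperator (q a b γ : ℝ) : (ℝ → ℝ) →ₗ[ℝ] ℝ → ℝ :=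
  LinearMap.mulLeft ℝ (fun x ↦ (1 - b * q * x) / (1 - b * q)) ∘ₗ
    (littleqJacobiOperator q a (b * q) + γ • LinearMap.id)

lemma bShiftOperator_apply (q a b γ : ℝ) (f : ℝ → ℝ) (x : ℝ) :
    bShiftOperator q a b γ f x =
      (1 - b * q * x) / (1 - b * q) * (littleqJacobiOperator q a (b * q) f x + γ * f x) :=
  rfl

lemma bShiftOperator_apply_eq (q a b γ : ℝ) (f : ℝ → ℝ) (x : ℝ) :
    bShiftOperator q a b γ f x =
      a * (b * q ^ 2 * x - 1) * (1 - b * q * x) / (x * (1 - b * q)) * (f (q * x) - f x) +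
        (x - 1) * (1 - b * q * x) / (x * (1 - b * q)) * (f (x / q) - f x) +
        γ * ((1 - b * q * x) / (1 - b * q)) * f x := by
  simp only [bShiftOperator_apply, littleqJacobiOperator, LinearMap.coe_mk, AddHom.coe_mk,
    mul_div_mul_comm]
  ring

lemma bShiftOperator_littleqJacobi_mul (hq0 : q ≠ 0) (hq : ∀ k, qPoch q q k ≠ 0)
    (ha : ∀ k, qPoch q (a * q) k ≠ 0) (hc : c ≠ 0) {n : ℕ}
    (hab : 1 - a * b * q ^ (2 * n + 2) ≠ 0) {x : ℝ} (hx : x ≠ 0) :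
    bShiftOperator q a b (1 + a * b * q ^ 2 - (a * c * q + b * q / c))
        (littleqJacobi q a (b * q) n) x =
      (1 - a * c * q ^ (n + 1)) * (1 - b * q ^ (n + 1) / c) /
          ((1 - b * q) * (1 - a * b * q ^ (2 * n + 2))) *
        (b * q * (1 - a * q ^ (n + 1)) * littleqJacobi q a b (n + 1) x +
          q ^ (-(n : ℤ)) * (1 - b * q ^ (n + 1)) * littleqJacobi q a b n x) := by
  have hqn := pow_ne_zero n hq0
  have heigenvalue : (q ^ (-(n : ℤ)) - 1) * (1 - a * (b * q) * q ^ (n + 1)) +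
        (1 + a * b * q ^ 2 - (a * c * q + b * q / c)) =
      q ^ (-(n : ℤ)) * (1 - a * c * q ^ (n + 1)) * (1 - b * q ^ (n + 1) / c) := by
    rw [zpow_neg, zpow_natCast]
    field_simp
    ring
  have hcontiguous := littleqJacobi_contiguous_mul hq0 hq ha b n x
  rw [bShiftOperator_apply, littleqJacobiOperator_littleqJacobi hq0 hq ha _ _ hx, ← add_mul,
    heigenvalue, zpow_neg, zpow_natCast]
  generalize 1 - a * b * q ^ (2 * n + 2) = d at hab hcontiguous ⊢
  field_simp
  linear_combination (1 - a * c * q ^ (n + 1)) * (c - b * q ^ (n + 1)) / (1 - b * q) * hcontiguous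

/- The factor `1 - q ^ n` makes the formula hold for `n = 0` too, where `n - 1` is truncated. -/
lemma bShiftOperator_littleqJacobi_pred_mul (hq0 : q ≠ 0) (hq : ∀ k, qPoch q q k ≠ 0)
    (ha : ∀ k, qPoch q (a * q) k ≠ 0) (hab : ∀ k, 1 - a * b * q ^ (k + 1) ≠ 0) (hc : c ≠ 0)
    (n : ℕ) {x : ℝ} (hx : x ≠ 0) :
    q ^ n * (1 - q ^ n) * bShiftOperator q a b (1 + a * b * q ^ 2 - (a * c * q + b * q / c))
        (littleqJacobi q a (b * q) (n - 1)) x =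
      (1 - q ^ n) * ((1 - a * c * q ^ n) * (1 - b * q ^ n / c) /
          ((1 - b * q) * (1 - a * b * q ^ (2 * n))) *
        (b * q ^ (n + 1) * (1 - a * q ^ n) * littleqJacobi q a b n x +
          q * (1 - b * q ^ n) * littleqJacobi q a b (n - 1) x)) := by
  rcases n with _ | n
  · simp only [pow_zero, sub_self, mul_zero, zero_mul]
  · have hz := zpow_neg_mul_pow hq0 n
    rw [Nat.add_sub_cancel, bShiftOperator_littleqJacobi_mul hq0 hq ha hc (hab (2 * n + 1)) hx,
      mul_add_one 2 n]
    linear_combination (1 - q ^ (n + 1)) * ((1 - a * c * q ^ (n + 1)) *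
      (1 - b * q ^ (n + 1) / c) / ((1 - b * q) * (1 - a * b * q ^ (2 * n + 2))) *
      (q * (1 - b * q ^ (n + 1)) * littleqJacobi q a b n x)) * hz

/-- The coefficient of `p_{n+1}` in `T^γ p_n`. -/
noncomputable def bShiftUp (q a b c : ℝ) (n : ℕ) : ℝ :=
  b * q / (1 - b * q) *
    ((1 - a * c * q ^ (n + 1)) * (1 - b * q ^ (n + 1) / c) / (1 - a * b * q ^ (2 * n + 2))) *
    ((1 - a * q ^ (n + 1)) * (1 - a * b * q ^ (n + 1)) / (1 - a * b * q ^ (2 * n + 1)))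

/-- The coefficient of `p_n` in `T^γ p_n`. -/
noncomputable def bShiftDiag (q a b c : ℝ) (n : ℕ) : ℝ :=
  q ^ (-(n : ℤ)) * (1 - a * c * q ^ (n + 1)) * (1 - b * q ^ (n + 1) / c)
      * (1 - a * b * q ^ (n + 1)) * (1 - b * q ^ (n + 1))
      / ((1 - b * q) * (1 - a * b * q ^ (2 * n + 1)) * (1 - a * b * q ^ (2 * n + 2)))
    + a * b ^ 2 * q ^ (n + 2) * (1 - a * c * q ^ n) * (1 - b * q ^ n / c)
        * (1 - q ^ n) * (1 - a * q ^ n)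
      / ((1 - b * q) * (1 - a * b * q ^ (2 * n)) * (1 - a * b * q ^ (2 * n + 1)))

/-- The coefficient of `p_{n-1}` in `T^γ p_n`; it vanishes for `n = 0`. -/
noncomputable def bShiftDown (q a b c : ℝ) (n : ℕ) : ℝ :=
  a * b * q ^ 2 * (1 - a * c * q ^ n) * (1 - b * q ^ n / c) * (1 - q ^ n) * (1 - b * q ^ n) /
    ((1 - b * q) * (1 - a * b * q ^ (2 * n)) * (1 - a * b * q ^ (2 * n + 1)))

lemma bShiftDown_zero (q a b c : ℝ) : bShiftDown q a b c 0 = 0 := by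
  simp [bShiftDown]

lemma littleqJacobi_eq_smul_add_smul (hq0 : q ≠ 0) {n : ℕ}
    (hab : 1 - a * b * q ^ (2 * n + 1) ≠ 0) :
    littleqJacobi q a b n =
      ((1 - a * b * q ^ (n + 1)) / (1 - a * b * q ^ (2 * n + 1))) •
          littleqJacobi q a (b * q) n +
        (a * b * q ^ (n + 1) * (1 - q ^ n) / (1 - a * b * q ^ (2 * n + 1))) •
          littleqJacobi q a (b * q) (n - 1) := by
  ext x
  simp only [Pi.add_apply, Pi.smul_apply, smul_eq_mul]
  field_simp
  linear_combination littleqJacobi_contiguous hq0 a b n x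

lemma bShiftOperator_littleqJacobi (hq0 : q ≠ 0) (hq : ∀ k, qPoch q q k ≠ 0)
    (ha : ∀ k, qPoch q (a * q) k ≠ 0) (hab : ∀ k, 1 - a * b * q ^ (k + 1) ≠ 0) (hc : c ≠ 0)
    (n : ℕ) {x : ℝ} (hx : x ≠ 0) :
    bShiftOperator q a b (1 + a * b * q ^ 2 - (a * c * q + b * q / c))
        (littleqJacobi q a b n) x =
      bShiftUp q a b c n * littleqJacobi q a b (n + 1) x +
        bShiftDiag q a b c n * littleqJacobi q a b n x +
        bShiftDown q a b c n * littleqJacobi q a b (n - 1) x := by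
  have hdecomp := congrFun (congrArg (bShiftOperator q a b (1 + a * b * q ^ 2 -
    (a * c * q + b * q / c))) (littleqJacobi_eq_smul_add_smul hq0 (hab (2 * n)))) x
  simp only [map_add, map_smul, Pi.add_apply, Pi.smul_apply, smul_eq_mul,
    bShiftOperator_littleqJacobi_mul hq0 hq ha hc (hab (2 * n + 1)) hx] at hdecomp
  have hpred := bShiftOperator_littleqJacobi_pred_mul hq0 hq ha hab hc n hx
  rw [hdecomp, bShiftUp, bShiftDiag, bShiftDown]
  generalize 1 - a * b * q ^ (2 * n) = d₀ at *
  generalize 1 - a * b * q ^ (2 * n + 1) = d₁ at *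
  generalize 1 - a * b * q ^ (2 * n + 2) = d₂ at *
  generalize 1 - b * q = e at *
  linear_combination a * b * q / d₁ * hpred

end LittleqJacobi

section Normalization

variable {q a b : ℝ}

lemma div_sqrt_tridiagonal {p h U V W A : ℕ → ℝ} (hh : ∀ n, 0 < h n) (hW : W 0 = 0)
    (hsymm : ∀ n, W (n + 1) * h n = U n * h (n + 1))
    (hA : ∀ n, A n * √(h n) = U n * √(h (n + 1))) (n : ℕ) :
    (U n * p (n + 1) + V n * p n + W n * p (n - 1)) / √(h n) =
      A n * (p (n + 1) / √(h (n + 1))) + V n * (p n / √(h n)) +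
        if n = 0 then 0 else A (n - 1) * (p (n - 1) / √(h (n - 1))) := by
  have hsqrt (n : ℕ) : √(h n) ≠ 0 := (Real.sqrt_pos.2 (hh n)).ne'
  have hU (n : ℕ) : U n / √(h n) = A n / √(h (n + 1)) := by
    rw [div_eq_div_iff (hsqrt n) (hsqrt (n + 1)), hA]
  have hWA (n : ℕ) : W (n + 1) / √(h (n + 1)) = A n / √(h n) := by
    rw [div_eq_div_iff (hsqrt (n + 1)) (hsqrt n)]
    refine mul_right_cancel₀ (hsqrt n) ?_
    rw [mul_assoc, Real.mul_self_sqrt (hh n).le, hsymm, mul_right_comm, hA, mul_assoc,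
      Real.mul_self_sqrt (hh (n + 1)).le]
  rcases n with _ | n
  · rw [if_pos rfl, hW]
    linear_combination p 1 * hU 0
  · rw [if_neg n.succ_ne_zero, Nat.add_sub_cancel]
    linear_combination p (n + 2) * hU (n + 1) + p n * hWA n

/-- The squared norm `h_n` of the little q-Jacobi polynomial `p_n(·;a,b;q)`. For `abq = 1` this
formula gives the junk value `0` although the squared norm has a limit. -/
noncomputable def littleqJacobiNormSq (q a b : ℝ) (n : ℕ) : ℝ :=
  qPochInf q (a * b * q ^ 2) / qPochInf q (a * q)
    * ((1 - a * b * q) * (a * q) ^ n / (1 - a * b * q ^ (2 * n + 1)))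
    * (qPoch q q n * qPoch q (b * q) n)
    / (qPoch q (a * q) n * qPoch q (a * b * q) n)

lemma one_sub_mul_pow_succ_ne_zero (hq0 : 0 < q) (hq1 : q ≤ 1) {x : ℝ} (hx1 : x * q ≠ 1)
    (hx2 : x * q ^ 2 < 1) (n : ℕ) : 1 - x * q ^ (n + 1) ≠ 0 := by
  rcases n with _ | n
  · simpa [sub_eq_zero] using hx1.symm
  · exact (one_sub_mul_pow_pos hq0 hq1 hx2 (by lia)).ne'

lemma one_sub_mul_pow_div_pos (hq0 : 0 < q) (hq1 : q ≤ 1) {x : ℝ} (hx1 : x * q ≠ 1)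
    (hx2 : x * q ^ 2 < 1) (n : ℕ) : 0 < (1 - x * q ^ (n + 1)) / (1 - x * q ^ (2 * n + 1)) := by
  rcases n with _ | n
  · rw [mul_zero, div_self (one_sub_mul_pow_succ_ne_zero hq0 hq1 hx1 hx2 0)]
    exact one_pos
  · exact div_pos (one_sub_mul_pow_pos hq0 hq1 hx2 (by lia))
      (one_sub_mul_pow_pos hq0 hq1 hx2 (by lia))

/- For `xq > 1` the negative factors `1 - xq` on both sides of the fraction cancel. -/
lemma one_sub_div_qPoch_pos (hq0 : 0 < q) (hq1 : q ≤ 1) {x : ℝ} (hx1 : x * q ≠ 1)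
    (hx2 : x * q ^ 2 < 1) (n : ℕ) :
    0 < (1 - x * q) / (1 - x * q ^ (2 * n + 1)) / qPoch q (x * q) n := by
  have hxq : 1 - x * q ≠ 0 := sub_ne_zero.2 hx1.symm
  rcases n with _ | n
  · rw [qPoch_zero, mul_zero, zero_add, pow_one, div_self hxq, div_one]
    exact one_pos
  · rw [qPoch_succ_left, div_right_comm, div_mul_cancel_left₀ hxq, mul_assoc, ← sq]
    exact div_pos (inv_pos.2 (qPoch_pos hq0 hq1 hx2 n))
      (one_sub_mul_pow_pos hq0 hq1 hx2 (by lia))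

lemma littleqJacobiNormSq_pos (hq0 : 0 < q) (hq1 : q < 1) (ha : 0 < a) (haq : a * q < 1)
    (hbq : b * q < 1) (hab1 : a * b * q ≠ 1) (hab2 : a * b * q ^ 2 < 1) (n : ℕ) :
    0 < littleqJacobiNormSq q a b n := by
  have hsign := one_sub_div_qPoch_pos hq0 hq1.le hab1 hab2 n
  have hab := qPochInf_pos hq0 hq1 hab2
  have haInf := qPochInf_pos hq0 hq1 haq
  have hqn := qPoch_pos hq0 hq1.le hq1 n
  have han := qPoch_pos hq0 hq1.le haq n
  have hbn := qPoch_pos hq0 hq1.le hbq n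
  calc 0 < qPochInf q (a * b * q ^ 2) / qPochInf q (a * q) * (a * q) ^ n *
        (qPoch q q n * qPoch q (b * q) n) / qPoch q (a * q) n *
        ((1 - a * b * q) / (1 - a * b * q ^ (2 * n + 1)) / qPoch q (a * b * q) n) := by positivity
    _ = littleqJacobiNormSq q a b n := by rw [littleqJacobiNormSq]; ring

lemma littleqJacobiNormSq_succ {n : ℕ} (ha : 1 - a * q ^ (n + 1) ≠ 0)
    (hab : ∀ k, 1 - a * b * q ^ (k + 1) ≠ 0) :
    (1 - a * q ^ (n + 1)) * (1 - a * b * q ^ (n + 1)) / (1 - a * b * q ^ (2 * n + 1)) *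
        littleqJacobiNormSq q a b (n + 1) =
      a * q * (1 - q ^ (n + 1)) * (1 - b * q ^ (n + 1)) / (1 - a * b * q ^ (2 * n + 3)) *
        littleqJacobiNormSq q a b n := by
  have habn := hab n
  have hab₁ := hab (2 * n)
  have hab₃ := hab (2 * n + 2)
  simp only [littleqJacobiNormSq, qPoch_succ, mul_assoc _ q (q ^ n), ← pow_succ' q n,
    mul_add_one 2 n, add_assoc, Nat.reduceAdd]
  generalize 1 - a * b * q ^ (2 * n + 1) = d₁ at *
  generalize 1 - a * b * q ^ (2 * n + 3) = d₃ at *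
  generalize 1 - a * b * q ^ (n + 1) = u at *
  generalize 1 - a * q ^ (n + 1) = v at *
  field_simp
  ring

/-- The coefficient `a_n^γ` of `φ_{n+1}` in `T^γ φ_n`. -/
noncomputable def bShiftOffDiag (q a b c : ℝ) (n : ℕ) : ℝ :=
  b * q * √(a * q) / (1 - b * q)
    * ((1 - a * c * q ^ (n + 1)) * (1 - b * q ^ (n + 1) / c) / (1 - a * b * q ^ (2 * n + 2)))
    * √((1 - q ^ (n + 1)) * (1 - a * q ^ (n + 1)) * (1 - b * q ^ (n + 1))
        * (1 - a * b * q ^ (n + 1))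
        / ((1 - a * b * q ^ (2 * n + 1)) * (1 - a * b * q ^ (2 * n + 3))))

lemma bShiftDown_succ_mul_normSq (c : ℝ) {n : ℕ} (ha : 1 - a * q ^ (n + 1) ≠ 0)
    (hab : ∀ k, 1 - a * b * q ^ (k + 1) ≠ 0) :
    bShiftDown q a b c (n + 1) * littleqJacobiNormSq q a b n =
      bShiftUp q a b c n * littleqJacobiNormSq q a b (n + 1) := by
  have hsucc := littleqJacobiNormSq_succ ha hab
  simp only [bShiftDown, bShiftUp, mul_add_one 2 n, add_assoc, Nat.reduceAdd]
  generalize 1 - a * b * q ^ (2 * n + 1) = d₁ at *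
  generalize 1 - a * b * q ^ (2 * n + 2) = d₂ at *
  generalize 1 - a * b * q ^ (2 * n + 3) = d₃ at *
  generalize 1 - b * q = e at *
  linear_combination
    -(b * q / e * ((1 - a * c * q ^ (n + 1)) * (1 - b * q ^ (n + 1) / c) / d₂)) * hsucc

lemma bShiftOffDiag_mul_sqrt_normSq (hq0 : 0 < q) (hq1 : q < 1) (ha : 0 < a) (haq : a * q < 1)
    (hbq : b * q < 1) (hab1 : a * b * q ≠ 1) (hab2 : a * b * q ^ 2 < 1) (c : ℝ) (n : ℕ) :
    bShiftOffDiag q a b c n * √(littleqJacobiNormSq q a b n) =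
      bShiftUp q a b c n * √(littleqJacobiNormSq q a b (n + 1)) := by
  have han : 0 < 1 - a * q ^ (n + 1) :=
    one_sub_mul_pow_pos hq0 hq1.le (m := 1) (by simpa) (by lia)
  have hab := one_sub_mul_pow_succ_ne_zero hq0 hq1.le hab1 hab2
  have hquot := one_sub_mul_pow_div_pos hq0 hq1.le hab1 hab2 n
  set S := (1 - q ^ (n + 1)) * (1 - a * q ^ (n + 1)) * (1 - b * q ^ (n + 1))
    * (1 - a * b * q ^ (n + 1)) / ((1 - a * b * q ^ (2 * n + 1)) * (1 - a * b * q ^ (2 * n + 3)))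
    with hS
  set w := (1 - a * q ^ (n + 1)) * (1 - a * b * q ^ (n + 1)) / (1 - a * b * q ^ (2 * n + 1))
    with hw
  have hw0 : 0 < w := by
    rw [hw, mul_div_assoc]
    exact mul_pos han hquot
  have hsq : a * q * S * littleqJacobiNormSq q a b n =
      w ^ 2 * littleqJacobiNormSq q a b (n + 1) := by
    have hsucc := littleqJacobiNormSq_succ han.ne' hab
    have hSw : S =
        (1 - q ^ (n + 1)) * (1 - b * q ^ (n + 1)) / (1 - a * b * q ^ (2 * n + 3)) * w := by
      rw [hS, hw, div_mul_div_comm]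
      congr 1 <;> ring
    rw [← hw] at hsucc
    linear_combination a * q * littleqJacobiNormSq q a b n * hSw - w * hsucc
  have hsqrt : √(a * q) * √S * √(littleqJacobiNormSq q a b n) =
      w * √(littleqJacobiNormSq q a b (n + 1)) := by
    rw [← Real.sqrt_mul (mul_pos ha hq0).le,
      ← Real.sqrt_mul' _ (littleqJacobiNormSq_pos hq0 hq1 ha haq hbq hab1 hab2 n).le, hsq,
      Real.sqrt_mul (sq_nonneg w), Real.sqrt_sq hw0.le]
  rw [bShiftOffDiag, bShiftUp, ← hS, ← hw]
  linear_combination b * q / (1 - b * q) * ((1 - a * c * q ^ (n + 1)) *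
    (1 - b * q ^ (n + 1) / c) / (1 - a * b * q ^ (2 * n + 2))) * hsqrt

end Normalization

/-- Case two (shift in `b`): the unbounded q-difference operator
`T^γ = r·(L^{(a,bq)} + γ)`, `r(x) = (1−bqx)/(1−bq)`, `γ = (1+abq²) − (acq + bq/c)`,
acts tridiagonally on the orthonormalised little q-Jacobi polynomials
`φ_n = p_n(·;a,b;q)/√(h_n)`. -/
theorem stmt_12 (q a b c : ℝ) (hq : 0 < q) (hq1 : q < 1)
    (ha0 : 0 < a) (ha1 : a < q⁻¹) (hb : b < q⁻¹) (hb0 : b ≠ 0) (hbq : b * q < 1)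
    (hc : c ≠ 0)
    (γ : ℝ) (hγ : γ = (1 + a * b * q ^ 2) - (a * c * q + b * q / c))
    (h : ℕ → ℝ)
    (hh : ∀ n, h n = qPochInf q (a * b * q ^ 2) / qPochInf q (a * q)
        * ((1 - a * b * q) * (a * q) ^ n / (1 - a * b * q ^ (2 * n + 1)))
        * (qPoch q q n * qPoch q (b * q) n)
        / (qPoch q (a * q) n * qPoch q (a * b * q) n))
    (φ : ℕ → ℝ → ℝ)
    (hφ : ∀ n x, φ n x = littleqJacobi q a b n x / Real.sqrt (h n))
    (A B : ℕ → ℝ)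
    (hA : ∀ n : ℕ, A n =
      b * q * Real.sqrt (a * q) / (1 - b * q)
        * ((1 - a * c * q ^ (n + 1)) * (1 - b * q ^ (n + 1) / c)
            / (1 - a * b * q ^ (2 * n + 2)))
        * Real.sqrt ((1 - q ^ (n + 1)) * (1 - a * q ^ (n + 1)) * (1 - b * q ^ (n + 1))
            * (1 - a * b * q ^ (n + 1))
            / ((1 - a * b * q ^ (2 * n + 1)) * (1 - a * b * q ^ (2 * n + 3)))))
    (hB : ∀ n : ℕ, B n =
      q ^ (-(n : ℤ)) * (1 - a * c * q ^ (n + 1)) * (1 - b * q ^ (n + 1) / c)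
          * (1 - a * b * q ^ (n + 1)) * (1 - b * q ^ (n + 1))
          / ((1 - b * q) * (1 - a * b * q ^ (2 * n + 1)) * (1 - a * b * q ^ (2 * n + 2)))
        + a * b ^ 2 * q ^ (n + 2) * (1 - a * c * q ^ n) * (1 - b * q ^ n / c)
            * (1 - q ^ n) * (1 - a * q ^ n)
          / ((1 - b * q) * (1 - a * b * q ^ (2 * n)) * (1 - a * b * q ^ (2 * n + 1)))) :
    ∀ (n : ℕ) (x : ℝ), x ≠ 0 →
      a * (b * q ^ 2 * x - 1) * (1 - b * q * x) / (x * (1 - b * q))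
          * (φ n (q * x) - φ n x)
        + (x - 1) * (1 - b * q * x) / (x * (1 - b * q)) * (φ n (x / q) - φ n x)
        + γ * ((1 - b * q * x) / (1 - b * q)) * φ n x
      = A n * φ (n + 1) x + B n * φ n x
        + (if n = 0 then 0 else A (n - 1) * φ (n - 1) x) := by
  obtain rfl : h = littleqJacobiNormSq q a b := funext hh
  obtain rfl : A = bShiftOffDiag q a b c := funext hA
  obtain rfl : B = bShiftDiag q a b c := funext hB
  have hφ_smul (n : ℕ) : φ n = (√(littleqJacobiNormSq q a b n))⁻¹ • littleqJacobi q a b n :=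
    funext fun x ↦ (hφ n x).trans (div_eq_inv_mul _ _)
  have haq : a * q < 1 := by simpa [hq.ne'] using mul_lt_mul_of_pos_right ha1 hq
  have hab2 : a * b * q ^ 2 < 1 := by
    linarith [(mul_lt_of_lt_one_right (mul_pos ha0 hq) hbq).trans haq]
  intro n x hx
  rw [← bShiftOperator_apply_eq, hγ]
  rcases eq_or_ne (a * b * q) 1 with hab1 | hab1
  · -- The formula for `h` gives `0` here, and division by `√0` makes every `φ n` zero.
    have hφ_zero (n : ℕ) : φ n = 0 := by simp [hφ_smul, littleqJacobiNormSq, hab1]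
    simp [hφ_zero]
  have hab := one_sub_mul_pow_succ_ne_zero hq hq1.le hab1 hab2
  have han (n : ℕ) : 1 - a * q ^ (n + 1) ≠ 0 :=
    (one_sub_mul_pow_pos hq hq1.le (m := 1) (by simpa) (by lia)).ne'
  have htridiagonal := bShiftOperator_littleqJacobi hq.ne' (fun k ↦ (qPoch_pos hq hq1.le hq1 k).ne')
    (fun k ↦ (qPoch_pos hq hq1.le haq k).ne') hab hc n hx
  have hsymmetrized := div_sqrt_tridiagonal (p := fun n ↦ littleqJacobi q a b n x)
    (V := bShiftDiag q a b c) (littleqJacobiNormSq_pos hq hq1 ha0 haq hbq hab1 hab2)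
    (bShiftDown_zero q a b c) (fun n ↦ bShiftDown_succ_mul_normSq c (han n) hab)
    (bShiftOffDiag_mul_sqrt_normSq hq hq1 ha0 haq hbq hab1 hab2 c) n
  simp only [hφ]
  rw [hφ_smul, map_smul, Pi.smul_apply, smul_eq_mul, inv_mul_eq_div, htridiagonal, hsymmetrized]
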